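/- arXiv:1609.03036 — 2 statements merged into one kernel-verified Lean document; each statement's English description precedes it below -/
import Mathlib

section
/- ζ(2) = 2·log 2·(1 − log(log 2)) − (1/2)·(log 2)² − 4·log 2 · ∑_{n=1}^∞ (−1)^{n+1}·ζ(2n)/(2n(2n+1)) · (log 2/(2π))^{2n}. -/
/-!
Differentiating the dilogarithm `Li₂(x) = ∑ xⁿ / n²` gives `d/dx Li₂(e^{-x}) = log (1 - e^{-x})`,
and `1 - e^{-x} = x e^{-x/2} · sinh (x/2) / (x/2)`. Euler's product for the sine at an imaginary
argument, with each logarithmic factor expanded in powers of `x`, yields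
`log (sinh (x/2) / (x/2)) = ∑_{n ≥ 1} (-1)^{n+1} ζ(2n)/n · (x/2π)^{2n}` (`hasSum_log_sinh`).
Integrating termwise from `0` to `log 2` expresses `Li₂(1/2) - ζ(2)` through the series of the
theorem (`dilog_exp_neg`), and the reflection formula `2 Li₂(1/2) + (log 2)² = ζ(2)`
(`dilog_half`) eliminates `Li₂(1/2)`.
-/

open Real

/-- The Riemann zeta function, as a real-valued function of a real argument. -/
noncomputable def zetaR (s : ℝ) : ℝ := (riemannZeta s).re

open Filter Topology Set

/-! ### Zeta values at even integers -/

lemma hasSum_zetaR_even (n : ℕ) :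
    HasSum (fun k : ℕ => 1 / ((k : ℝ) + 1) ^ (2 * (n + 1))) (zetaR (2 * (n + 1))) := by
  have hs : Summable (fun k : ℕ => 1 / ((k : ℝ) + 1) ^ (2 * (n + 1))) := by
    have := (summable_nat_add_iff 1).mpr
      (Real.summable_one_div_nat_pow (p := 2 * (n + 1)).mpr (by omega))
    simpa using this
  have hz : zetaR (2 * (n + 1)) = ∑' k : ℕ, 1 / ((k : ℝ) + 1) ^ (2 * (n + 1)) := by
    have h := zeta_eq_tsum_one_div_nat_add_one_cpow (s := ((2 * (n + 1) : ℕ) : ℂ))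
      (by rw [Complex.natCast_re]; norm_cast; omega)
    simp only [Complex.cpow_natCast] at h
    have h2 : riemannZeta ((2 * (n + 1) : ℝ) : ℂ)
        = ((∑' k : ℕ, 1 / ((k : ℝ) + 1) ^ (2 * (n + 1)) : ℝ) : ℂ) := by
      push_cast at h ⊢
      exact h
    rw [zetaR, h2, Complex.ofReal_re]
  rw [hz]
  exact hs.hasSum

lemma zetaR_even_nonneg (n : ℕ) : 0 ≤ zetaR (2 * (n + 1)) :=
  (hasSum_zetaR_even n).nonneg fun k => by positivity

lemma hasSum_zetaR_two : HasSum (fun k : ℕ => 1 / ((k : ℝ) + 1) ^ 2) (zetaR 2) := by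
  have := hasSum_zetaR_even 0
  simpa using this

lemma zetaR_even_le (n : ℕ) : zetaR (2 * (n + 1)) ≤ zetaR 2 := by
  refine hasSum_le (fun k => ?_) (hasSum_zetaR_even n) hasSum_zetaR_two
  have h1 : (1 : ℝ) ≤ (k : ℝ) + 1 := by linarith [(Nat.cast_nonneg k : (0 : ℝ) ≤ k)]
  exact one_div_le_one_div_of_le (by positivity) (pow_le_pow_right₀ h1 (by omega))

/-! ### Power series of `log (sinh (π t) / (π t))` -/

/-- The logarithm of Euler's product for `sinh (π t) / (π t)`, that is, for `sin` at `i t`. -/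
lemma hasSum_log_euler_sinh {t : ℝ} (ht : 0 < t) :
    HasSum (fun k : ℕ => log (1 + t ^ 2 / ((k : ℝ) + 1) ^ 2))
      (log (sinh (π * t) / (π * t))) := by
  rw [hasSum_iff_tendsto_nat_of_nonneg]
  · have hC := Complex.tendsto_euler_sin_prod (Complex.I * t)
    have hR : Tendsto (fun n : ℕ => ∏ j ∈ Finset.range n, (1 + t ^ 2 / ((j : ℝ) + 1) ^ 2))
        atTop (𝓝 (sinh (π * t) / (π * t))) := by
      have h1 : Tendsto (fun n : ℕ => ((π * t *
          ∏ j ∈ Finset.range n, (1 + t ^ 2 / ((j : ℝ) + 1) ^ 2) : ℝ) : ℂ))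
          atTop (𝓝 ((sinh (π * t) : ℝ) : ℂ)) := by
        have h2 := hC.const_mul (-Complex.I)
        have e : -Complex.I * Complex.sin (π * (Complex.I * t)) = ((sinh (π * t) : ℝ) : ℂ) := by
          rw [show (π : ℂ) * (Complex.I * t) = ((π * t : ℝ) : ℂ) * Complex.I by push_cast; ring,
            Complex.sin_mul_I]
          push_cast
          linear_combination (-Complex.sinh (π * t)) * Complex.I_mul_I
        rw [e] at h2
        refine h2.congr fun n => ?_
        push_cast
        have e2 : ∀ j : ℕ, (1 : ℂ) - (Complex.I * t) ^ 2 / ((j : ℂ) + 1) ^ 2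
            = 1 + (t : ℂ) ^ 2 / ((j : ℂ) + 1) ^ 2 := fun j => by
          rw [mul_pow, Complex.I_sq]; ring
        simp only [e2]
        linear_combination (-(π : ℂ) * t * ∏ j ∈ Finset.range n,
          (1 + (t : ℂ) ^ 2 / ((j : ℂ) + 1) ^ 2)) * Complex.I_mul_I
      have h3 : Tendsto (fun n : ℕ => π * t *
          ∏ j ∈ Finset.range n, (1 + t ^ 2 / ((j : ℝ) + 1) ^ 2)) atTop (𝓝 (sinh (π * t))) := by
        exact (Complex.isometry_ofReal.isEmbedding.tendsto_nhds_iff).mpr h1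
      have h4 := h3.div_const (π * t)
      refine h4.congr fun n => ?_
      have := pi_pos
      field_simp
    have hpos : sinh (π * t) / (π * t) ≠ 0 := by
      have : 0 < sinh (π * t) := Real.sinh_pos_iff.mpr (by positivity)
      positivity
    refine (hR.log hpos).congr fun n => ?_
    rw [Real.log_prod]
    intro i _
    positivity
  · intro k
    apply Real.log_nonneg
    have : 0 ≤ t ^ 2 / ((k : ℝ) + 1) ^ 2 := by positivity
    linarith

/-- Expanding each factor of Euler's product in powers of `t` and summing over the factors first. -/
lemma hasSum_log_sinh {t : ℝ} (ht : 0 < t) (ht1 : t < 1) :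
    HasSum (fun n : ℕ => (-1 : ℝ) ^ n / (n + 1) * zetaR (2 * (n + 1)) * t ^ (2 * (n + 1)))
      (log (sinh (π * t) / (π * t))) := by
  set f : ℕ × ℕ → ℝ := fun p =>
    (-1 : ℝ) ^ p.2 / (p.2 + 1) * (t ^ 2 / ((p.1 : ℝ) + 1) ^ 2) ^ (p.2 + 1) with hf
  have hsum : Summable f := by
    have hg : Summable (fun n : ℕ => (t ^ 2) ^ n) :=
      summable_geometric_of_lt_one (by positivity) (by nlinarith)
    refine Summable.of_norm_bounded
      (hasSum_zetaR_two.summable.mul_of_nonneg hg (fun k => by positivity) (fun k => by positivity))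
      fun p => ?_
    obtain ⟨k, n⟩ := p
    simp only [hf, norm_mul, norm_div, norm_pow, norm_neg, norm_one, one_pow, Real.norm_eq_abs]
    rw [abs_of_pos ht, abs_of_pos (by positivity : (0 : ℝ) < n + 1),
      abs_of_pos (by positivity : (0 : ℝ) < k + 1)]
    have hk : (1 : ℝ) ≤ (k : ℝ) + 1 := by linarith [(Nat.cast_nonneg k : (0 : ℝ) ≤ k)]
    have hn : (1 : ℝ) ≤ (n : ℝ) + 1 := by linarith [(Nat.cast_nonneg n : (0 : ℝ) ≤ n)]
    have hk2 : (1 : ℝ) ≤ ((k : ℝ) + 1) ^ 2 := one_le_pow₀ hk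
    have h1 : 1 / ((n : ℝ) + 1) ≤ 1 := by rw [div_le_one (by positivity)]; exact hn
    have h2 : t ^ 2 / ((k : ℝ) + 1) ^ 2 ≤ 1 / ((k : ℝ) + 1) ^ 2 := by
      gcongr; nlinarith
    have h3 : t ^ 2 / ((k : ℝ) + 1) ^ 2 ≤ t ^ 2 := div_le_self (by positivity) hk2
    calc 1 / ((n : ℝ) + 1) * (t ^ 2 / ((k : ℝ) + 1) ^ 2) ^ (n + 1)
        ≤ 1 * (t ^ 2 / ((k : ℝ) + 1) ^ 2) ^ (n + 1) := by gcongr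
      _ = (t ^ 2 / ((k : ℝ) + 1) ^ 2) * (t ^ 2 / ((k : ℝ) + 1) ^ 2) ^ n := by ring
      _ ≤ (1 / ((k : ℝ) + 1) ^ 2) * (t ^ 2) ^ n := by gcongr
  have hrow : ∀ k : ℕ, HasSum (fun n => f (k, n)) (log (1 + t ^ 2 / ((k : ℝ) + 1) ^ 2)) := by
    intro k
    have hk2 : (1 : ℝ) ≤ ((k : ℝ) + 1) ^ 2 :=
      one_le_pow₀ (by linarith [(Nat.cast_nonneg k : (0 : ℝ) ≤ k)])
    have hlt : t ^ 2 / ((k : ℝ) + 1) ^ 2 < 1 := by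
      rw [div_lt_one (by positivity)]; nlinarith
    have h := (Real.hasSum_pow_div_log_of_abs_lt_one (x := -(t ^ 2 / ((k : ℝ) + 1) ^ 2))
      (by rwa [abs_neg, abs_of_nonneg (by positivity)])).neg
    rw [neg_neg, sub_neg_eq_add] at h
    convert! h using 1
    funext n
    simp only [hf]
    rw [neg_pow (t ^ 2 / ((k : ℝ) + 1) ^ 2), pow_succ (-1 : ℝ) n]
    ring
  have hcol : ∀ n : ℕ, HasSum (fun k => f (k, n))
      ((-1 : ℝ) ^ n / (n + 1) * zetaR (2 * (n + 1)) * t ^ (2 * (n + 1))) := by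
    intro n
    have h := (hasSum_zetaR_even n).mul_left ((-1 : ℝ) ^ n / (n + 1) * t ^ (2 * (n + 1)))
    convert! h using 1
    · funext k
      simp only [hf, div_pow, ← pow_mul]
      ring
    · ring
  have htot : HasSum f (log (sinh (π * t) / (π * t))) := by
    have := hsum.hasSum.prod_fiberwise hrow
    rw [← this.unique (hasSum_log_euler_sinh ht)]
    exact hsum.hasSum
  exact ((Equiv.prodComm ℕ ℕ).hasSum_iff.mpr htot).prod_fiberwise hcol

/-! ### The dilogarithm and its reflection formula -/

/-- The dilogarithm `Li₂(x) = ∑_{n ≥ 1} xⁿ / n²`. It is used for `0 ≤ x ≤ 1` only, where the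
series converges. -/
noncomputable def dilog (x : ℝ) : ℝ := ∑' n : ℕ, x ^ (n + 1) / ((n : ℝ) + 1) ^ 2

lemma dilog_zero : dilog 0 = 0 := by simp [dilog]

lemma dilog_one : dilog 1 = zetaR 2 := by
  simpa [dilog] using hasSum_zetaR_two.tsum_eq

lemma continuousOn_dilog : ContinuousOn dilog (Icc 0 1) := by
  refine continuousOn_tsum (fun n => by fun_prop) hasSum_zetaR_two.summable fun n x hx => ?_
  rw [Real.norm_of_nonneg (div_nonneg (pow_nonneg hx.1 _) (by positivity))]
  gcongr
  exact pow_le_one₀ hx.1 hx.2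

lemma hasDerivAt_dilog {x : ℝ} (hx0 : 0 < x) (hx1 : x < 1) :
    HasDerivAt dilog (-log (1 - x) / x) x := by
  obtain ⟨r, hxr, hr1⟩ := exists_between hx1
  have hr0 : 0 < r := hx0.trans hxr
  have h := hasDerivAt_tsum_of_isPreconnected (t := Ioo (-r) r) (u := fun n : ℕ => r ^ n)
    (g := fun (n : ℕ) (y : ℝ) => y ^ (n + 1) / ((n : ℝ) + 1) ^ 2)
    (g' := fun (n : ℕ) (y : ℝ) => y ^ n / ((n : ℝ) + 1))
    (y₀ := 0) (y := x)
    (summable_geometric_of_lt_one hr0.le hr1) isOpen_Ioo isPreconnected_Ioo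
    (fun n y _ => by
      have h := (hasDerivAt_pow (n + 1) y).div_const (((n : ℝ) + 1) ^ 2)
      convert! h using 1
      rw [Nat.add_sub_cancel]
      push_cast
      field_simp)
    (fun n y hy => by
      have hn : (1 : ℝ) ≤ (n : ℝ) + 1 := by linarith [(Nat.cast_nonneg n : (0 : ℝ) ≤ n)]
      rw [norm_div, norm_pow, Real.norm_eq_abs, Real.norm_of_nonneg (by positivity)]
      refine (div_le_self (by positivity) hn).trans ?_
      exact pow_le_pow_left₀ (abs_nonneg y) (abs_le.mpr ⟨hy.1.le, hy.2.le⟩) n)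
    ⟨by linarith, hr0⟩ (by simp [summable_zero]) ⟨by linarith, hxr⟩
  have hs : HasSum (fun n : ℕ => x ^ n / ((n : ℝ) + 1)) (-log (1 - x) / x) := by
    have h := (Real.hasSum_pow_div_log_of_abs_lt_one (x := x)
      (by rwa [abs_of_pos hx0])).div_const x
    convert! h using 1
    funext n
    field_simp
    ring
  rw [hs.tsum_eq] at h
  exact h

lemma eq_of_hasDerivAt_zero {f : ℝ → ℝ} {a b : ℝ} (hab : a < b) (hc : ContinuousOn f (Icc a b))
    (hd : ∀ x ∈ Ioo a b, HasDerivAt f 0 x) : f b = f a := by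
  obtain ⟨c, _, h⟩ := exists_hasDerivAt_eq_slope f (fun _ => 0) hab hc hd
  have : b - a ≠ 0 := by linarith
  field_simp at h
  linarith

/-- Continuity at `0` uses `log (1 - x) = O(x)` against `x * log x → 0`; the value `log 0 = 0`
agrees with the limit. -/
lemma continuousOn_log_mul_log :
    ContinuousOn (fun x : ℝ => log x * log (1 - x)) (Icc 0 (1 / 2)) := by
  intro x hx
  apply ContinuousAt.continuousWithinAt
  rcases hx.1.eq_or_lt with h0 | h0
  · subst h0
    have hd : DifferentiableAt ℝ (fun x : ℝ => log (1 - x)) 0 :=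
      DifferentiableAt.log (by fun_prop) (by norm_num)
    have h := (Real.continuous_mul_log.continuousAt (x := 0)).mul (continuousAt_dslope_same.mpr hd)
    refine h.congr (Eventually.of_forall fun y => ?_)
    have := sub_smul_dslope (fun x : ℝ => log (1 - x)) 0 y
    simp only [sub_zero, log_one, smul_eq_mul] at this
    simp only [Pi.mul_apply]
    rw [← this]
    ring
  · have h1 : 1 - x ≠ 0 := by linarith [hx.2]
    exact (continuousAt_id.log h0.ne').mul (ContinuousAt.log (by fun_prop) h1)

/-- Euler's reflection formula `Li₂(x) + Li₂(1 - x) + log x log (1 - x) = ζ(2)` at `x = 1 / 2`. -/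
lemma dilog_half : 2 * dilog (1 / 2) + log 2 ^ 2 = zetaR 2 := by
  have key := eq_of_hasDerivAt_zero (a := 0) (b := 1 / 2)
    (f := fun x => dilog x + dilog (1 - x) + log x * log (1 - x)) (by norm_num)
    (by
      refine ContinuousOn.add (ContinuousOn.add ?_ ?_) continuousOn_log_mul_log
      · exact continuousOn_dilog.mono (Icc_subset_Icc le_rfl (by norm_num))
      · exact continuousOn_dilog.comp (by fun_prop)
          fun x hx => ⟨by linarith [hx.2], by linarith [hx.1]⟩)
    (by
      intro x hx
      have hx0 : 0 < x := hx.1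
      have hx1 : 0 < 1 - x := by linarith [hx.2]
      have hs : HasDerivAt (fun y : ℝ => 1 - y) (-1) x := by
        simpa using (hasDerivAt_id x).const_sub 1
      have h1 := hasDerivAt_dilog hx0 (by linarith)
      have h2 := (hasDerivAt_dilog hx1 (by linarith)).comp x hs
      have h3 := (Real.hasDerivAt_log hx0.ne').mul (hs.log hx1.ne')
      convert! (h1.add h2).add h3 using 1
      rw [sub_sub_cancel]
      field_simp
      ring)
  norm_num [dilog_zero, dilog_one] at key
  have hl : log (1 / 2) = -log 2 := by rw [one_div, log_inv]
  rw [hl] at key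
  linarith

/-! ### Integration of `log (1 - e^{-x})` -/

/-- The antiderivative, vanishing at `0`, of the series for `log (sinh (x / 2) / (x / 2))`. -/
noncomputable def logSinhPrimitive (x : ℝ) : ℝ :=
  ∑' n : ℕ, (-1 : ℝ) ^ n / (n + 1) * zetaR (2 * (n + 1)) *
    (x * (x / (2 * π)) ^ (2 * (n + 1)) / (2 * (n + 1) + 1))

lemma hasDerivAt_logSinhPrimitive {x : ℝ} (hx : x ∈ Ioo (-1 : ℝ) 1) :
    HasDerivAt logSinhPrimitive
      (∑' n : ℕ, (-1 : ℝ) ^ n / (n + 1) * zetaR (2 * (n + 1)) * (x / (2 * π)) ^ (2 * (n + 1))) x := by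
  have hπ := Real.pi_gt_three
  refine hasDerivAt_tsum_of_isPreconnected (t := Ioo (-1 : ℝ) 1)
    (g := fun (n : ℕ) (y : ℝ) => (-1 : ℝ) ^ n / (n + 1) * zetaR (2 * (n + 1)) *
      (y * (y / (2 * π)) ^ (2 * (n + 1)) / (2 * (n + 1) + 1)))
    (g' := fun (n : ℕ) (y : ℝ) =>
      (-1 : ℝ) ^ n / (n + 1) * zetaR (2 * (n + 1)) * (y / (2 * π)) ^ (2 * (n + 1)))
    (u := fun n : ℕ => zetaR 2 * (1 / 4) ^ n) (y₀ := 0)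
    ((summable_geometric_of_lt_one (by norm_num) (by norm_num)).mul_left _)
    isOpen_Ioo isPreconnected_Ioo (fun n y _ => ?_) (fun n y hy => ?_)
    (by norm_num) (by simp [summable_zero]) hx
  · have h := (((hasDerivAt_pow (2 * (n + 1) + 1) y).div_const
      ((2 * π) ^ (2 * (n + 1)) * (2 * ((n : ℝ) + 1) + 1)))).const_mul
        ((-1 : ℝ) ^ n / (n + 1) * zetaR (2 * (n + 1)))
    convert! h using 1
    · funext z
      rw [div_pow, pow_succ]
      field_simp
    · rw [div_pow, Nat.add_sub_cancel]
      push_cast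
      field_simp
  · have hn : (1 : ℝ) ≤ (n : ℝ) + 1 := by linarith [(Nat.cast_nonneg n : (0 : ℝ) ≤ n)]
    have hy2 : |y / (2 * π)| ≤ 1 / 2 := by
      rw [abs_div, abs_of_pos (by positivity : 0 < 2 * π), div_le_iff₀ (by positivity)]
      have := abs_lt.mpr hy
      linarith
    rw [norm_mul, norm_mul, norm_div, norm_pow, norm_neg, norm_one, one_pow, norm_pow,
      Real.norm_of_nonneg (zetaR_even_nonneg n), Real.norm_of_nonneg (by positivity),
      Real.norm_eq_abs]
    have h1 : 1 / ((n : ℝ) + 1) ≤ 1 := by rw [div_le_one (by positivity)]; exact hn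
    have h2 : |y / (2 * π)| ^ (2 * (n + 1)) ≤ (1 / 4) ^ n := by
      calc |y / (2 * π)| ^ (2 * (n + 1)) ≤ (1 / 2) ^ (2 * (n + 1)) := by gcongr
        _ = (1 / 4) * (1 / 4) ^ n := by rw [pow_mul, pow_succ]; norm_num; ring
        _ ≤ (1 / 4) ^ n := by
          have : (0 : ℝ) ≤ (1 / 4) ^ n := by positivity
          linarith
    calc 1 / ((n : ℝ) + 1) * zetaR (2 * (n + 1)) * |y / (2 * π)| ^ (2 * (n + 1))
        ≤ 1 * zetaR 2 * (1 / 4) ^ n := by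
          have := zetaR_even_nonneg n
          gcongr
          · linarith [zetaR_even_le n]
          · exact zetaR_even_le n
      _ = _ := by ring

/-- `1 - e^{-x} = x · e^{-x/2} · sinh (x/2) / (x/2)`, in logarithmic form. -/
lemma log_one_sub_exp_neg {x : ℝ} (hx : 0 < x) (hx1 : x < 1) :
    log (1 - exp (-x)) = log x - x / 2 +
      ∑' n : ℕ, (-1 : ℝ) ^ n / (n + 1) * zetaR (2 * (n + 1)) * (x / (2 * π)) ^ (2 * (n + 1)) := by
  have hπ := Real.pi_gt_three
  have ht : x / (2 * π) < 1 := by rw [div_lt_one (by positivity)]; linarith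
  rw [(hasSum_log_sinh (by positivity) ht).tsum_eq]
  have e : π * (x / (2 * π)) = x / 2 := by field_simp
  have hsh : 0 < sinh (x / 2) := Real.sinh_pos_iff.mpr (by positivity)
  have h : 1 - exp (-x) = x * exp (-(x / 2)) * (sinh (x / 2) / (x / 2)) := by
    have e1 : exp (-(x / 2)) * exp (x / 2) = 1 := by rw [← exp_add]; simp
    have e2 : exp (-(x / 2)) * exp (-(x / 2)) = exp (-x) := by rw [← exp_add]; ring_nf
    rw [Real.sinh_eq, ← e2, ← e1]
    field_simp
  rw [e, h, log_mul (by positivity) (by positivity), log_mul hx.ne' (exp_pos _).ne', log_exp]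
  ring

/-- Integration of `d/dx Li₂(e^{-x}) = log (1 - e^{-x})` from `0` to `b`. -/
lemma dilog_exp_neg {b : ℝ} (hb : 0 < b) (hb1 : b < 1) :
    dilog (exp (-b)) = zetaR 2 + b * log b - b - b ^ 2 / 4 + logSinhPrimitive b := by
  have key := eq_of_hasDerivAt_zero (a := 0) (b := b)
    (f := fun x => dilog (exp (-x)) - x * log x + x + x ^ 2 / 4 - logSinhPrimitive x) hb
    (by
      have h1 : ContinuousOn (fun x => dilog (exp (-x))) (Icc 0 b) :=
        continuousOn_dilog.comp (by fun_prop)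
          fun x hx => ⟨(exp_pos _).le, exp_le_one_iff.mpr (by linarith [hx.1])⟩
      have h2 : ContinuousOn logSinhPrimitive (Icc 0 b) := fun x hx =>
        (hasDerivAt_logSinhPrimitive
          ⟨by linarith [hx.1], by linarith [hx.2]⟩).continuousAt.continuousWithinAt
      exact (((h1.sub Real.continuous_mul_log.continuousOn).add continuousOn_id).add
        (by fun_prop)).sub h2)
    (by
      intro x hx
      have hx0 : 0 < x := hx.1
      have hx1 : x < 1 := hx.2.trans hb1
      have he : HasDerivAt (fun y : ℝ => exp (-y)) (exp (-x) * (-1)) x :=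
        (hasDerivAt_neg x).exp
      have h1 := (hasDerivAt_dilog (exp_pos (-x))
        (exp_lt_one_iff.mpr (by linarith))).comp x he
      have h2 := Real.hasDerivAt_mul_log hx0.ne'
      have h3 := (hasDerivAt_pow 2 x).div_const 4
      have h4 := hasDerivAt_logSinhPrimitive (x := x) ⟨by linarith, hx1⟩
      convert! (((h1.sub h2).add (hasDerivAt_id x)).add h3).sub h4 using 1
      have h5 := log_one_sub_exp_neg hx0 hx1
      have h6 : -log (1 - exp (-x)) / exp (-x) * (exp (-x) * -1) = log (1 - exp (-x)) := by
        field_simp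
      rw [h6, h5]
      norm_num
      ring)
  have h0 : logSinhPrimitive 0 = 0 := by simp [logSinhPrimitive]
  simp only [neg_zero, exp_zero, dilog_one, h0] at key
  norm_num at key
  linarith

/-- `ζ(2) = 2·log 2·(1 − log(log 2)) − (1/2)·(log 2)²
  − 4·log 2 · ∑_{n=1}^∞ (−1)^{n+1}·ζ(2n)/(2n(2n+1)) · (log 2/(2π))^{2n}`. -/
theorem zeta2_log_two_repr :
    zetaR 2 = 2 * Real.log 2 * (1 - Real.log (Real.log 2)) -
      1 / 2 * (Real.log 2) ^ 2 -
      4 * Real.log 2 * ∑' n : ℕ,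
        (-1 : ℝ) ^ (n + 1 + 1) * zetaR (2 * (n + 1)) /
            (2 * (n + 1) * (2 * (n + 1) + 1)) *
          (Real.log 2 / (2 * π)) ^ (2 * (n + 1)) := by
  have hL0 : 0 < log 2 := log_pos (by norm_num)
  have hL1 : log 2 < 1 := by linarith [Real.log_two_lt_d9]
  have h1 := dilog_exp_neg hL0 hL1
  rw [exp_neg, exp_log (by norm_num : (0 : ℝ) < 2), ← one_div] at h1
  have h2 := dilog_half
  have h3 : logSinhPrimitive (log 2) = 2 * log 2 * ∑' n : ℕ,
        (-1 : ℝ) ^ (n + 1 + 1) * zetaR (2 * (n + 1)) /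
            (2 * (n + 1) * (2 * (n + 1) + 1)) *
          (Real.log 2 / (2 * π)) ^ (2 * (n + 1)) := by
    rw [logSinhPrimitive, ← tsum_mul_left]
    congr 1
    funext n
    rw [pow_succ, pow_succ]
    field_simp
  rw [h3] at h1
  linarith
end

section
/- Li₃(3/4) + 2·Li₃(1/3) + Li₃(1/4) = (19/6)·ζ(3) + (1/3)·(log 3)³ − (4/3)·(log 2)³ − (π²/3)·log 2 + 2·log(4/3)·(log 2)². -/
/-!
With `A = Li₃(1/3)`, `B = Li₃(-1/3)`, the claim is the sum of two classical facts.

* Landen's three-term relation for `Li₃(z) + Li₃(1 - z) + Li₃(1 - 1/z)` at `z = 3/4`, which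
  evaluates `Li₃(3/4) + Li₃(1/4) + B`.
* The evaluation of `2 A - B`. The one-variable relation `polylog_three_kummer` between
  `Li₃(±(1-x)/(1+x))`, `Li₃(1-x)`, `Li₃(1/(1+x))` and `Li₃(1-x²)`, taken at `x = 1/2`, gives
  `A - B` in terms of `Li₃(1/2)`, `Li₃(2/3)` and `Li₃(3/4)`. Landen's relation at
  `z = 1/2, 2/3, 3/4` and the duplication formula for `Li₃(1/4)` and for `Li₃(±1)` eliminate
  everything except `A`, `B`, `ζ(3)` and logarithms.

Each functional equation holds because both sides have the same derivative on an open interval and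
agree at an endpoint. Since `Li₃'(x) = Li₂(x)/x`, the derivative of a relation for `Li₃` reduces to
relations for `Li₂`, which are proved in the same way from `Li₂'(x) = -log (1 - x)/x`.
-/

open Real

/-- The trilogarithm `Li₃(x) = ∑_{n=1}^∞ xⁿ/n³` for real `x`. -/
noncomputable def Li3 (x : ℝ) : ℝ := ∑' n : ℕ, x ^ (n + 1) / (n + 1) ^ 3

/-- The polylogarithm `Li_s(x) = ∑_{n ≥ 1} xⁿ/nˢ` of natural order `s`, indexed from `n = 0` so that
`polylog 3` is definitionally `Li3`. -/
noncomputable def polylog (s : ℕ) (x : ℝ) : ℝ := ∑' n : ℕ, x ^ (n + 1) / ((n : ℝ) + 1) ^ s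

/-! ### Analytic properties of polylogarithms -/

lemma summable_inv_succ_pow (s : ℕ) : Summable fun n : ℕ => 1 / ((n : ℝ) + 1) ^ (s + 2) := by
  have h := (summable_nat_add_iff 1).2 (Real.summable_one_div_nat_pow.2 (by omega : 1 < s + 2))
  simpa using h

lemma polylog_term_bound (s : ℕ) {x : ℝ} (hx : |x| ≤ 1) (n : ℕ) :
    ‖x ^ (n + 1) / ((n : ℝ) + 1) ^ s‖ ≤ 1 / ((n : ℝ) + 1) ^ s := by
  rw [norm_div, norm_pow, norm_pow, Real.norm_eq_abs, Real.norm_eq_abs,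
    abs_of_pos (by positivity : (0 : ℝ) < n + 1)]
  gcongr
  exact pow_le_one₀ (abs_nonneg x) hx

lemma summable_polylog (s : ℕ) {x : ℝ} (hx : |x| ≤ 1) :
    Summable fun n : ℕ => x ^ (n + 1) / ((n : ℝ) + 1) ^ (s + 2) :=
  .of_norm_bounded (summable_inv_succ_pow s) (polylog_term_bound _ hx)

lemma continuousOn_polylog (s : ℕ) : ContinuousOn (polylog (s + 2)) {x | |x| ≤ 1} :=
  continuousOn_tsum (fun n => by fun_prop) (summable_inv_succ_pow s)
    (fun n _ hx => polylog_term_bound _ hx n)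

lemma continuousOn_polylog_comp (s : ℕ) {g : ℝ → ℝ} {S : Set ℝ} (hg : ContinuousOn g S)
    (h : ∀ x ∈ S, |g x| ≤ 1) : ContinuousOn (fun x => polylog (s + 2) (g x)) S :=
  (continuousOn_polylog s).comp hg h

lemma hasDerivAt_polylog (s : ℕ) {x : ℝ} (hx : |x| < 1) (h0 : x ≠ 0) :
    HasDerivAt (polylog (s + 1)) (polylog s x / x) x := by
  obtain ⟨r, hxr, hr⟩ := exists_between hx
  have hr0 : 0 < r := (abs_nonneg x).trans_lt hxr
  have key := hasDerivAt_tsum_of_isPreconnected (𝕜 := ℝ)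
    (g := fun (n : ℕ) (y : ℝ) => y ^ (n + 1) / ((n : ℝ) + 1) ^ (s + 1))
    (g' := fun (n : ℕ) (y : ℝ) => y ^ n / ((n : ℝ) + 1) ^ s)
    (u := fun n => r ^ n) (t := Metric.ball 0 r) (y₀ := 0) (y := x)
    (summable_geometric_of_lt_one hr0.le hr) Metric.isOpen_ball
    (convex_ball 0 r).isPreconnected ?_ ?_ (by simpa using hr0) ?_ (by simpa using hxr)
  · refine key.congr_deriv ?_
    rw [polylog, ← tsum_div_const]
    refine tsum_congr fun n => ?_
    field_simp
    ring
  · intro n y _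
    refine ((hasDerivAt_pow (n + 1) y).div_const _).congr_deriv ?_
    push_cast
    field_simp
    ring
  · intro n y hy
    have hy' : |y| ≤ r := by simpa using (Metric.mem_ball.1 hy).le
    rw [norm_div, norm_pow, norm_pow, Real.norm_eq_abs, Real.norm_eq_abs,
      abs_of_pos (by positivity : (0 : ℝ) < n + 1)]
    have h1 : (1 : ℝ) ≤ ((n : ℝ) + 1) ^ s := one_le_pow₀ (by linarith [n.cast_nonneg (α := ℝ)])
    exact (div_le_self (by positivity) h1).trans (by gcongr)
  · simp

lemma HasDerivAt.polylog_comp (s : ℕ) {g : ℝ → ℝ} {g' x : ℝ} (hg : HasDerivAt g g' x)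
    (h1 : |g x| < 1) (h0 : g x ≠ 0) :
    HasDerivAt (fun y => polylog (s + 1) (g y)) (polylog s (g x) / g x * g') x :=
  (hasDerivAt_polylog s h1 h0).comp x hg

lemma polylog_one_eq {x : ℝ} (hx : |x| < 1) : polylog 1 x = -log (1 - x) := by
  simpa [polylog] using (Real.hasSum_pow_div_log_of_abs_lt_one hx).tsum_eq

/-- The derivative of the dilogarithm along a function `g`. -/
lemma HasDerivAt.dilog_comp {g : ℝ → ℝ} {g' x : ℝ} (hg : HasDerivAt g g' x)
    (h1 : |g x| < 1) (h0 : g x ≠ 0) :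
    HasDerivAt (fun y => polylog 2 (g y)) (-Real.log (1 - g x) / g x * g') x := by
  rw [← polylog_one_eq h1]
  exact hg.polylog_comp 1 h1 h0

lemma eq_endpoints_of_hasDerivAt_zero {f : ℝ → ℝ} {a b : ℝ} (hab : a ≤ b)
    (hc : ContinuousOn f (Set.Icc a b)) (hd : ∀ x ∈ Set.Ioo a b, HasDerivAt f 0 x) :
    f a = f b := by
  rcases hab.eq_or_lt with rfl | h
  · rfl
  · obtain ⟨c, -, hc'⟩ := exists_hasDerivAt_eq_slope f (fun _ => 0) h hc hd
    have hne : b - a ≠ 0 := by linarith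
    field_simp at hc'
    linarith

/-! ### Special values and duplication -/

lemma polylog_zero_right (s : ℕ) : polylog s 0 = 0 := by simp [polylog]

lemma polylog_two_one : polylog 2 1 = π ^ 2 / 6 := by
  have h := (hasSum_nat_add_iff' 1).2 hasSum_zeta_two
  simpa [polylog] using h.tsum_eq

lemma polylog_three_one : polylog 3 1 = zetaR 3 := by
  have h := zeta_eq_tsum_one_div_nat_add_one_cpow (s := 3) (by norm_num)
  have h2 : riemannZeta 3 = ((polylog 3 1 : ℝ) : ℂ) := by
    rw [h, polylog, Complex.ofReal_tsum]
    refine tsum_congr fun n => ?_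
    push_cast
    rw [one_pow, ← Complex.cpow_natCast]
    norm_num
  rw [zetaR]
  push_cast
  rw [h2, Complex.ofReal_re]

lemma polylog_duplication (s : ℕ) {x : ℝ} (hx : |x| ≤ 1) :
    polylog (s + 2) x + polylog (s + 2) (-x) = 2 / 2 ^ (s + 2) * polylog (s + 2) (x ^ 2) := by
  have hx' : |-x| ≤ 1 := by rwa [abs_neg]
  have hinj : Function.Injective fun k : ℕ => 2 * k + 1 := fun a b h => by simpa using h
  rw [polylog, polylog, ← (summable_polylog s hx).tsum_add (summable_polylog s hx'), polylog,
    ← tsum_mul_left, ← hinj.tsum_eq]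
  · refine tsum_congr fun k => ?_
    have e : (-x) ^ (2 * k + 1 + 1) = x ^ (2 * k + 1 + 1) := Even.neg_pow ⟨k + 1, by ring⟩ x
    have e2 : (((2 * k + 1 : ℕ) : ℝ) + 1) = 2 * ((k : ℝ) + 1) := by push_cast; ring
    rw [e, e2, mul_pow]
    field_simp
    ring
  · intro n hn
    by_contra hcon
    have hev : Even n := by
      by_contra ho
      obtain ⟨k, rfl⟩ := Nat.not_even_iff_odd.1 ho
      exact hcon ⟨k, rfl⟩
    refine hn ?_
    simp only [Odd.neg_pow (Even.add_one hev) x]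
    ring

lemma polylog_two_neg_one : polylog 2 (-1) = -(π ^ 2 / 12) := by
  have h := polylog_duplication 0 (x := 1) (by simp)
  norm_num [polylog_two_one] at h
  linarith

lemma polylog_three_neg_one : polylog 3 (-1) = -(3 / 4 * zetaR 3) := by
  have h := polylog_duplication 1 (x := 1) (by simp)
  norm_num [polylog_three_one] at h
  linarith

/-! ### Landen's relations -/

/-- The junk value `log 0 = 0` is the correct limiting value of the product at `z = 1`, because
`log z` vanishes to first order there. -/
lemma continuousOn_log_mul_log_one_sub :
    ContinuousOn (fun z => log z * log (1 - z)) (Set.Ioi 0) := by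
  have h1 : ContinuousOn (dslope log 1) (Set.Ioi 0) :=
    (continuousOn_dslope (Ioi_mem_nhds one_pos)).2
      ⟨Real.continuousOn_log.mono fun x hx => (ne_of_gt hx : x ≠ 0),
        Real.differentiableAt_log one_ne_zero⟩
  have h2 : Continuous fun z : ℝ => (1 - z) * log (1 - z) :=
    Real.continuous_mul_log.comp (continuous_const.sub continuous_id)
  refine (h1.mul h2.continuousOn).neg.congr fun z _ => ?_
  have h3 : (z - 1) * dslope log 1 z = log z := by
    simpa using sub_smul_dslope log 1 z
  rw [← h3]
  simp only [Pi.neg_apply, Pi.mul_apply]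
  ring

/-- Euler's reflection formula for the dilogarithm. -/
lemma polylog_two_reflection {z : ℝ} (h0 : 0 < z) (h1 : z ≤ 1) :
    polylog 2 z + polylog 2 (1 - z) = π ^ 2 / 6 - log z * log (1 - z) := by
  have h := eq_endpoints_of_hasDerivAt_zero
    (f := fun z => polylog 2 z + polylog 2 (1 - z) + log z * log (1 - z)) h1 ?_ ?_
  · simp only [sub_self, polylog_zero_right, polylog_two_one, Real.log_one] at h
    linarith
  · refine ((continuousOn_polylog_comp 0 (by fun_prop) ?_).add
      (continuousOn_polylog_comp 0 (by fun_prop) ?_)).add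
      (continuousOn_log_mul_log_one_sub.mono fun x hx => h0.trans_le hx.1)
    all_goals
      rintro x ⟨hx1, hx2⟩
      rw [abs_le]
      constructor <;> linarith
  · rintro x ⟨hx1, hx2⟩
    have hx0 : 0 < x := h0.trans hx1
    have hx3 : 1 - x ≠ 0 := by linarith
    have d1 := (hasDerivAt_id' x).dilog_comp (by rw [abs_lt]; constructor <;> linarith) hx0.ne'
    have d2 := ((hasDerivAt_id' x).const_sub 1).dilog_comp
      (by rw [abs_lt]; constructor <;> linarith) hx3
    have d3 := (Real.hasDerivAt_log hx0.ne').mul (((hasDerivAt_id' x).const_sub 1).log hx3)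
    refine ((d1.add d2).add d3).congr_deriv ?_
    rw [sub_sub_cancel]
    field_simp
    ring

lemma abs_one_sub_inv_le {z : ℝ} (h0 : 1 / 2 ≤ z) : |1 - 1 / z| ≤ 1 := by
  have hz : 0 < z := by linarith
  have h2 : 1 / z ≤ 2 := by rw [div_le_iff₀ hz]; linarith
  have h3 : 0 < 1 / z := by positivity
  rw [abs_le]
  constructor <;> linarith

lemma abs_one_sub_inv_lt {z : ℝ} (h0 : 1 / 2 < z) : |1 - 1 / z| < 1 := by
  have hz : 0 < z := by linarith
  have h2 : 1 / z < 2 := by rw [div_lt_iff₀ hz]; linarith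
  have h3 : 0 < 1 / z := by positivity
  rw [abs_lt]
  constructor <;> linarith

lemma hasDerivAt_one_sub_inv {z : ℝ} (hz : z ≠ 0) :
    HasDerivAt (fun z : ℝ => 1 - 1 / z) (1 / z ^ 2) z := by
  simpa using (hasDerivAt_inv hz).const_sub 1

lemma continuousOn_one_sub_inv {a b : ℝ} (ha : 0 < a) :
    ContinuousOn (fun z : ℝ => 1 - 1 / z) (Set.Icc a b) := fun _ hz =>
  (hasDerivAt_one_sub_inv (ha.trans_le hz.1).ne').continuousAt.continuousWithinAt

lemma continuousOn_log_Icc {a b : ℝ} (ha : 0 < a) : ContinuousOn log (Set.Icc a b) :=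
  Real.continuousOn_log.mono fun _ hx => (ha.trans_le hx.1).ne'

lemma polylog_two_landen {z : ℝ} (h0 : 1 / 2 ≤ z) (h1 : z ≤ 1) :
    polylog 2 (1 - z) + polylog 2 (1 - 1 / z) = -(1 / 2 * log z ^ 2) := by
  have hz : 0 < z := by linarith
  have h := eq_endpoints_of_hasDerivAt_zero
    (f := fun z => polylog 2 (1 - z) + polylog 2 (1 - 1 / z) + 1 / 2 * log z ^ 2) h1 ?_ ?_
  · norm_num [polylog_zero_right] at h
    norm_num
    linarith
  · refine ((continuousOn_polylog_comp 0 (by fun_prop) ?_).add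
      (continuousOn_polylog_comp 0 (continuousOn_one_sub_inv hz) ?_)).add
      (((continuousOn_log_Icc hz).pow 2).const_mul _)
    · rintro x ⟨hx1, hx2⟩
      rw [abs_le]
      constructor <;> linarith
    · rintro x ⟨hx1, hx2⟩
      exact abs_one_sub_inv_le (by linarith)
  · rintro x ⟨hx1, hx2⟩
    have hx0 : 0 < x := hz.trans hx1
    have hx3 : 1 - x ≠ 0 := by linarith
    have e : 1 - 1 / x = -(1 - x) / x := by field_simp; ring
    have hx4 : 1 - 1 / x ≠ 0 := by
      rw [e]
      exact div_ne_zero (neg_ne_zero.2 hx3) hx0.ne'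
    have d2 := ((hasDerivAt_id' x).const_sub 1).dilog_comp
      (by rw [abs_lt]; constructor <;> linarith) hx3
    have d3 := (hasDerivAt_one_sub_inv hx0.ne').dilog_comp
      (abs_one_sub_inv_lt (by linarith)) hx4
    have d4 := ((Real.hasDerivAt_log hx0.ne').pow 2).const_mul (1 / 2)
    refine ((d2.add d3).add d4).congr_deriv ?_
    rw [sub_sub_cancel, sub_sub_cancel, e, one_div x, Real.log_inv]
    field_simp
    ring

lemma polylog_three_landen {z : ℝ} (h0 : 1 / 2 ≤ z) (h1 : z ≤ 1) :
    polylog 3 z + polylog 3 (1 - z) + polylog 3 (1 - 1 / z) =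
      zetaR 3 + 1 / 6 * log z ^ 3 + π ^ 2 / 6 * log z - 1 / 2 * log z ^ 2 * log (1 - z) := by
  have hz : 0 < z := by linarith
  have h := eq_endpoints_of_hasDerivAt_zero
    (f := fun z => polylog 3 z + polylog 3 (1 - z) + polylog 3 (1 - 1 / z) - 1 / 6 * log z ^ 3
      - π ^ 2 / 6 * log z + 1 / 2 * (log z * (log z * log (1 - z)))) h1 ?_ ?_
  · have e : 1 - 1 / (1 : ℝ) = 0 := by norm_num
    simp only [e, sub_self, polylog_zero_right, polylog_three_one, Real.log_one] at h
    linarith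
  · have cl := continuousOn_log_Icc (b := 1) hz
    refine (((((continuousOn_polylog_comp 1 (by fun_prop) ?_).add
      (continuousOn_polylog_comp 1 (by fun_prop) ?_)).add
      (continuousOn_polylog_comp 1 (continuousOn_one_sub_inv hz) ?_)).sub
      ((cl.pow 3).const_mul _)).sub (cl.const_mul _)).add ((cl.mul
      (continuousOn_log_mul_log_one_sub.mono fun x hx => hz.trans_le hx.1)).const_mul _)
    · rintro x ⟨hx1, hx2⟩
      rw [abs_le]
      constructor <;> linarith
    · rintro x ⟨hx1, hx2⟩
      rw [abs_le]
      constructor <;> linarith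
    · rintro x ⟨hx1, hx2⟩
      exact abs_one_sub_inv_le (by linarith)
  · rintro x ⟨hx1, hx2⟩
    have hx0 : 0 < x := hz.trans hx1
    have hx3 : 1 - x ≠ 0 := by linarith
    have e : 1 - 1 / x = -(1 - x) / x := by field_simp; ring
    have hx4 : 1 - 1 / x ≠ 0 := by
      rw [e]
      exact div_ne_zero (neg_ne_zero.2 hx3) hx0.ne'
    have d1 := (hasDerivAt_id' x).polylog_comp 2
      (by rw [abs_lt]; constructor <;> linarith) hx0.ne'
    have d2 := ((hasDerivAt_id' x).const_sub 1).polylog_comp 2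
      (by rw [abs_lt]; constructor <;> linarith) hx3
    have d3 := (hasDerivAt_one_sub_inv hx0.ne').polylog_comp 2
      (abs_one_sub_inv_lt (by linarith)) hx4
    have dl := Real.hasDerivAt_log hx0.ne'
    have d4 := (dl.pow 3).const_mul (1 / 6)
    have d5 := dl.const_mul (π ^ 2 / 6)
    have d6 := (dl.mul (dl.mul (((hasDerivAt_id' x).const_sub 1).log hx3))).const_mul (1 / 2)
    refine (((((d1.add d2).add d3).sub d4).sub d5).add d6).congr_deriv ?_
    have r1 := polylog_two_reflection hx0 hx2.le
    have r2 := polylog_two_landen (z := x) (by linarith) hx2.le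
    simp only [Pi.mul_apply]
    rw [eq_sub_of_add_eq r1, eq_sub_of_add_eq' r2, e]
    field_simp
    ring

/-! ### The relation in `(1 - x) / (1 + x)` -/

lemma hasDerivAt_cayley {x : ℝ} (hx : 1 + x ≠ 0) :
    HasDerivAt (fun x : ℝ => (1 - x) / (1 + x)) (-2 / (1 + x) ^ 2) x := by
  refine (((hasDerivAt_id' x).const_sub 1).div ((hasDerivAt_id' x).const_add 1) hx).congr_deriv ?_
  field_simp
  ring

lemma hasDerivAt_inv_one_add {x : ℝ} (hx : 1 + x ≠ 0) :
    HasDerivAt (fun x : ℝ => 1 / (1 + x)) (-1 / (1 + x) ^ 2) x := by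
  simpa using ((hasDerivAt_id' x).const_add 1).fun_inv hx

lemma hasDerivAt_one_sub_sq (x : ℝ) : HasDerivAt (fun x : ℝ => 1 - x ^ 2) (-(2 * x)) x := by
  simpa using (hasDerivAt_pow 2 x).const_sub 1

/-- Bounds keeping the arguments in `polylog_three_kummer` within the closed unit interval. The
endpoint `1` is attained only at `x = 0`, see `kummer_args_lt`. -/
lemma kummer_args {x : ℝ} (h0 : 0 ≤ x) (h1 : x < 1) :
    (0 < (1 - x) / (1 + x) ∧ (1 - x) / (1 + x) ≤ 1) ∧ (0 < 1 / (1 + x) ∧ 1 / (1 + x) ≤ 1) ∧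
      (0 < 1 - x ^ 2 ∧ 1 - x ^ 2 ≤ 1) := by
  have h2 : 0 < 1 + x := by linarith
  have h3 : 0 < 1 - x := by linarith
  refine ⟨⟨by positivity, ?_⟩, ⟨by positivity, ?_⟩, by nlinarith, by nlinarith⟩
  · rw [div_le_one h2]; linarith
  · rw [div_le_one h2]; linarith

lemma kummer_args_lt {x : ℝ} (h0 : 0 < x) (h1 : x < 1) :
    (1 - x) / (1 + x) < 1 ∧ 1 / (1 + x) < 1 ∧ 1 - x ^ 2 < 1 := by
  have h2 : 0 < 1 + x := by linarith
  refine ⟨?_, ?_, by nlinarith⟩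
  · rw [div_lt_one h2]; linarith
  · rw [div_lt_one h2]; linarith

lemma continuousOn_kummer (s : ℕ) {b : ℝ} (hb : b < 1) :
    ContinuousOn (fun x => polylog (s + 2) ((1 - x) / (1 + x))) (Set.Icc 0 b) ∧
    ContinuousOn (fun x => polylog (s + 2) (-((1 - x) / (1 + x)))) (Set.Icc 0 b) ∧
    ContinuousOn (fun x => polylog (s + 2) (1 - x)) (Set.Icc 0 b) ∧
    ContinuousOn (fun x => polylog (s + 2) (1 / (1 + x))) (Set.Icc 0 b) ∧
    ContinuousOn (fun x => polylog (s + 2) (1 - x ^ 2)) (Set.Icc 0 b) := by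
  have cu : ContinuousOn (fun x : ℝ => (1 - x) / (1 + x)) (Set.Icc 0 b) := fun x hx =>
    (hasDerivAt_cayley (by linarith [hx.1])).continuousAt.continuousWithinAt
  have cv : ContinuousOn (fun x : ℝ => 1 / (1 + x)) (Set.Icc 0 b) := fun x hx =>
    (hasDerivAt_inv_one_add (by linarith [hx.1])).continuousAt.continuousWithinAt
  refine ⟨continuousOn_polylog_comp s cu ?_, continuousOn_polylog_comp s cu.neg ?_,
    continuousOn_polylog_comp s (by fun_prop) ?_, continuousOn_polylog_comp s cv ?_,
    continuousOn_polylog_comp s (by fun_prop) ?_⟩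
  all_goals
    rintro x ⟨hx1, hx2⟩
    obtain ⟨⟨a1, a2⟩, ⟨a3, a4⟩, a5, a6⟩ := kummer_args hx1 (hx2.trans_lt hb)
    simp only [abs_le]
    constructor <;> linarith

lemma continuousOn_log_one_add {b : ℝ} :
    ContinuousOn (fun x : ℝ => log (1 + x)) (Set.Icc 0 b) :=
  ContinuousOn.log (by fun_prop) fun x hx => by linarith [hx.1]

lemma polylog_two_sub_relation {x : ℝ} (h0 : 0 ≤ x) (h1 : x < 1) :
    2 * polylog 2 (1 - x) - 2 * polylog 2 (1 / (1 + x)) - polylog 2 (1 - x ^ 2) =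
      log (1 + x) ^ 2 - π ^ 2 / 6 := by
  have h := eq_endpoints_of_hasDerivAt_zero
    (f := fun x => 2 * polylog 2 (1 - x) - 2 * polylog 2 (1 / (1 + x)) - polylog 2 (1 - x ^ 2)
      - log (1 + x) ^ 2) h0 ?_ ?_
  · norm_num [polylog_two_one] at h
    norm_num
    linarith
  · obtain ⟨-, -, c3, c4, c5⟩ := continuousOn_kummer 0 h1
    exact (((c3.const_mul 2).sub (c4.const_mul 2)).sub c5).sub (continuousOn_log_one_add.pow 2)
  · rintro y ⟨hy0, hyx⟩
    have hy1 : y < 1 := hyx.trans h1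
    obtain ⟨-, ⟨a3, -⟩, a5, -⟩ := kummer_args hy0.le hy1
    obtain ⟨-, b2, b3⟩ := kummer_args_lt hy0 hy1
    have hp : 1 + y ≠ 0 := by linarith
    have hm : 1 - y ≠ 0 := by linarith
    have d3 := ((hasDerivAt_id' y).const_sub 1).dilog_comp
      (by rw [abs_lt]; constructor <;> linarith) hm
    have d4 := (hasDerivAt_inv_one_add hp).dilog_comp (by rwa [abs_of_pos a3]) a3.ne'
    have d5 := (hasDerivAt_one_sub_sq y).dilog_comp (by rwa [abs_of_pos a5]) a5.ne'
    have d6 := (((hasDerivAt_id' y).const_add 1).log hp).pow 2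
    refine ((((d3.const_mul 2).sub (d4.const_mul 2)).sub d5).sub d6).congr_deriv ?_
    have e1 : 1 - 1 / (1 + y) = y / (1 + y) := by field_simp; ring
    have e2 : 1 - y ^ 2 = (1 - y) * (1 + y) := by ring
    rw [sub_sub_cancel, sub_sub_cancel, e1, Real.log_div hy0.ne' hp, Real.log_pow, e2]
    field_simp
    ring

lemma polylog_two_cayley {x : ℝ} (h0 : 0 ≤ x) (h1 : x < 1) :
    -2 * (polylog 2 ((1 - x) / (1 + x)) - polylog 2 (-((1 - x) / (1 + x)))) +
      2 * polylog 2 (1 - x) + 2 * polylog 2 (1 / (1 + x)) = π ^ 2 / 6 - log (1 + x) ^ 2 := by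
  have h := eq_endpoints_of_hasDerivAt_zero
    (f := fun x => -2 * (polylog 2 ((1 - x) / (1 + x)) - polylog 2 (-((1 - x) / (1 + x)))) +
      2 * polylog 2 (1 - x) + 2 * polylog 2 (1 / (1 + x)) + log (1 + x) ^ 2) h0 ?_ ?_
  · norm_num [polylog_two_one, polylog_two_neg_one] at h
    norm_num
    linarith
  · obtain ⟨c1, c2, c3, c4, -⟩ := continuousOn_kummer 0 h1
    exact ((((c1.sub c2).const_mul (-2)).add (c3.const_mul 2)).add (c4.const_mul 2)).add
      (continuousOn_log_one_add.pow 2)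
  · rintro y ⟨hy0, hyx⟩
    have hy1 : y < 1 := hyx.trans h1
    obtain ⟨⟨a1, -⟩, ⟨a3, -⟩, -⟩ := kummer_args hy0.le hy1
    obtain ⟨b1, b2, -⟩ := kummer_args_lt hy0 hy1
    have hp : 1 + y ≠ 0 := by linarith
    have hm : 1 - y ≠ 0 := by linarith
    have d1 := (hasDerivAt_cayley hp).dilog_comp (by rwa [abs_of_pos a1]) a1.ne'
    have d2 := (hasDerivAt_cayley hp).fun_neg.dilog_comp
      (by rwa [abs_neg, abs_of_pos a1]) (neg_ne_zero.2 a1.ne')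
    have d3 := ((hasDerivAt_id' y).const_sub 1).dilog_comp
      (by rw [abs_lt]; constructor <;> linarith) hm
    have d4 := (hasDerivAt_inv_one_add hp).dilog_comp (by rwa [abs_of_pos a3]) a3.ne'
    have d6 := (((hasDerivAt_id' y).const_add 1).log hp).pow 2
    refine (((((d1.sub d2).const_mul (-2)).add (d3.const_mul 2)).add (d4.const_mul 2)).add
      d6).congr_deriv ?_
    have e1 : 1 - 1 / (1 + y) = y / (1 + y) := by field_simp; ring
    have e2 : 1 - (1 - y) / (1 + y) = 2 * y / (1 + y) := by field_simp; ring
    have e3 : 1 - -((1 - y) / (1 + y)) = 2 / (1 + y) := by field_simp; ring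
    rw [sub_sub_cancel, e1, e2, e3, Real.log_div hy0.ne' hp, Real.log_div (by positivity) hp,
      Real.log_div two_ne_zero hp, Real.log_mul two_ne_zero hy0.ne']
    field_simp
    ring

lemma polylog_three_kummer {x : ℝ} (h0 : 0 ≤ x) (h1 : x < 1) :
    polylog 3 ((1 - x) / (1 + x)) - polylog 3 (-((1 - x) / (1 + x))) - 2 * polylog 3 (1 - x) -
      2 * polylog 3 (1 / (1 + x)) + 1 / 2 * polylog 3 (1 - x ^ 2) =
      -(7 / 4 * zetaR 3) + π ^ 2 / 6 * log (1 + x) - 1 / 3 * log (1 + x) ^ 3 := by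
  have h := eq_endpoints_of_hasDerivAt_zero
    (f := fun x => polylog 3 ((1 - x) / (1 + x)) - polylog 3 (-((1 - x) / (1 + x))) -
      2 * polylog 3 (1 - x) - 2 * polylog 3 (1 / (1 + x)) + 1 / 2 * polylog 3 (1 - x ^ 2) -
      π ^ 2 / 6 * log (1 + x) + 1 / 3 * log (1 + x) ^ 3) h0 ?_ ?_
  · norm_num [polylog_three_one, polylog_three_neg_one] at h
    norm_num
    linarith
  · obtain ⟨c1, c2, c3, c4, c5⟩ := continuousOn_kummer 1 h1
    have cl := continuousOn_log_one_add (b := x)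
    exact (((((c1.sub c2).sub (c3.const_mul 2)).sub (c4.const_mul 2)).add
      (c5.const_mul (1 / 2))).sub (cl.const_mul _)).add ((cl.pow 3).const_mul _)
  · rintro y ⟨hy0, hyx⟩
    have hy1 : y < 1 := hyx.trans h1
    obtain ⟨⟨a1, -⟩, ⟨a3, -⟩, a5, -⟩ := kummer_args hy0.le hy1
    obtain ⟨b1, b2, b3⟩ := kummer_args_lt hy0 hy1
    have hp : 1 + y ≠ 0 := by linarith
    have hm : 1 - y ≠ 0 := by linarith
    have d1 := (hasDerivAt_cayley hp).polylog_comp 2 (by rwa [abs_of_pos a1]) a1.ne'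
    have d2 := (hasDerivAt_cayley hp).fun_neg.polylog_comp 2
      (by rwa [abs_neg, abs_of_pos a1]) (neg_ne_zero.2 a1.ne')
    have d3 := ((hasDerivAt_id' y).const_sub 1).polylog_comp 2
      (by rw [abs_lt]; constructor <;> linarith) hm
    have d4 := (hasDerivAt_inv_one_add hp).polylog_comp 2 (by rwa [abs_of_pos a3]) a3.ne'
    have d5 := (hasDerivAt_one_sub_sq y).polylog_comp 2 (by rwa [abs_of_pos a5]) a5.ne'
    have dl := ((hasDerivAt_id' y).const_add 1).log hp
    refine ((((((d1.sub d2).sub (d3.const_mul 2)).sub (d4.const_mul 2)).add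
      (d5.const_mul (1 / 2))).sub (dl.const_mul (π ^ 2 / 6))).add
      ((dl.pow 3).const_mul (1 / 3))).congr_deriv ?_
    -- `(1 - y²)` times the derivative is `polylog_two_cayley` plus `y` times
    -- `polylog_two_sub_relation`.
    have r1 := polylog_two_cayley hy0.le hy1
    have r2 := polylog_two_sub_relation hy0.le hy1
    have e2 : 1 / (1 - y ^ 2) = 1 / (1 - y) * (1 / (1 + y)) := by field_simp; ring
    rw [div_eq_mul_one_div (polylog 2 (1 - y ^ 2)), e2]
    generalize polylog 2 ((1 - y) / (1 + y)) = A at *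
    generalize polylog 2 (-((1 - y) / (1 + y))) = B at *
    generalize polylog 2 (1 - y) = C at *
    generalize polylog 2 (1 / (1 + y)) = D at *
    generalize polylog 2 (1 - y ^ 2) = E at *
    field_simp
    push_cast
    linear_combination 18 * r1 + 18 * y * r2

/-! ### The evaluation -/

/-- `2 Li₃(1/3) - Li₃(-1/3)` in terms of `ζ(3)` and `log 3`. -/
lemma two_mul_polylog_three_third :
    2 * polylog 3 (1 / 3) - polylog 3 (-(1 / 3)) =
      13 / 6 * zetaR 3 + 1 / 6 * log 3 ^ 3 - π ^ 2 / 6 * log 3 := by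
  have k := polylog_three_kummer (x := 1 / 2) (by norm_num) (by norm_num)
  have l1 := polylog_three_landen (z := 1 / 2) (by norm_num) (by norm_num)
  have l2 := polylog_three_landen (z := 2 / 3) (by norm_num) (by norm_num)
  have l3 := polylog_three_landen (z := 3 / 4) (by norm_num) (by norm_num)
  have d := polylog_duplication 1 (x := 1 / 2) (by norm_num [abs_le])
  have g1 : log (1 / 2) = -log 2 := by rw [one_div, Real.log_inv]
  have g2 : log (2 / 3) = log 2 - log 3 := Real.log_div (by norm_num) (by norm_num)
  have g3 : log (1 / 3) = -log 3 := by rw [one_div, Real.log_inv]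
  have g4' : log 4 = 2 * log 2 := by
    rw [show (4 : ℝ) = 2 ^ 2 by norm_num, Real.log_pow]; norm_num
  have g4 : log (1 / 4) = -(2 * log 2) := by rw [one_div, Real.log_inv, g4']
  have g5 : log (3 / 4) = log 3 - 2 * log 2 := by
    rw [Real.log_div (by norm_num) (by norm_num), g4']
  have g6 : log (3 / 2) = log 3 - log 2 := Real.log_div (by norm_num) (by norm_num)
  rw [show (1 : ℝ) - 1 / 2 = 1 / 2 by norm_num, show (1 : ℝ) + 1 / 2 = 3 / 2 by norm_num,
    show (1 / 2 : ℝ) / (3 / 2) = 1 / 3 by norm_num, show (1 : ℝ) / (3 / 2) = 2 / 3 by norm_num,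
    show (1 : ℝ) - (1 / 2) ^ 2 = 3 / 4 by norm_num, g6] at k
  rw [show (1 : ℝ) - 1 / 2 = 1 / 2 by norm_num, show (1 : ℝ) - 1 / (1 / 2) = -1 by norm_num,
    polylog_three_neg_one, g1] at l1
  rw [show (1 : ℝ) - 2 / 3 = 1 / 3 by norm_num,
    show (1 : ℝ) - 1 / (2 / 3) = -(1 / 2) by norm_num, g2, g3] at l2
  rw [show (1 : ℝ) - 3 / 4 = 1 / 4 by norm_num,
    show (1 : ℝ) - 1 / (3 / 4) = -(1 / 3) by norm_num, g4, g5] at l3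
  rw [show ((1 : ℝ) / 2) ^ 2 = 1 / 4 by norm_num] at d
  norm_num only at k l1 l2 l3 d ⊢
  linear_combination (2 / 3) * k + (4 / 3) * l2 - (1 / 3) * l3 - (4 / 3) * d + (4 / 3) * l1

/-- `Li₃(3/4) + 2·Li₃(1/3) + Li₃(1/4) = (19/6)·ζ(3) + (1/3)·(log 3)³ − (4/3)·(log 2)³
  − (π²/3)·log 2 + 2·log(4/3)·(log 2)²`. -/
theorem Li3_identity_one :
    Li3 (3 / 4) + 2 * Li3 (1 / 3) + Li3 (1 / 4) =
      19 / 6 * zetaR 3 + 1 / 3 * (Real.log 3) ^ 3 - 4 / 3 * (Real.log 2) ^ 3 -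
        π ^ 2 / 3 * Real.log 2 + 2 * Real.log (4 / 3) * (Real.log 2) ^ 2 := by
  change polylog 3 (3 / 4) + 2 * polylog 3 (1 / 3) + polylog 3 (1 / 4) = _
  have h := two_mul_polylog_three_third
  have l3 := polylog_three_landen (z := 3 / 4) (by norm_num) (by norm_num)
  have g4' : log 4 = 2 * log 2 := by
    rw [show (4 : ℝ) = 2 ^ 2 by norm_num, Real.log_pow]; norm_num
  have g4 : log (1 / 4) = -(2 * log 2) := by rw [one_div, Real.log_inv, g4']
  have g5 : log (3 / 4) = log 3 - 2 * log 2 := by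
    rw [Real.log_div (by norm_num) (by norm_num), g4']
  have g6 : log (4 / 3) = 2 * log 2 - log 3 := by
    rw [Real.log_div (by norm_num) (by norm_num), g4']
  rw [show (1 : ℝ) - 3 / 4 = 1 / 4 by norm_num,
    show (1 : ℝ) - 1 / (3 / 4) = -(1 / 3) by norm_num, g4, g5] at l3
  rw [g6]
  linear_combination h + l3
end
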